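/- Let X ~ N(θ, σ²I_d) in ℝᵈ with d ≥ 3. The James–Stein estimator δ_JS(X) = (1 − (d−2)σ²/‖X‖²)X satisfies E[‖δ_JS(X) − θ‖²] = dσ² − (d−2)²σ⁴ E[1/‖X‖²] < dσ² = E[‖X − θ‖²] for every θ ∈ ℝᵈ; hence δ(X) = X is inadmissible under squared error loss. -/

import Mathlib

open MeasureTheory ProbabilityTheory

lemma hasDerivAt_gpdf (μ : ℝ) (v : NNReal) (hv : v ≠ 0) (x : ℝ) :
    HasDerivAt (gaussianPDFReal μ v) (-((x - μ) / v) * gaussianPDFReal μ v x) x := by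
  have hv' : (v : ℝ) ≠ 0 := by exact_mod_cast hv
  rw [gaussianPDFReal_def]
  have h1 : HasDerivAt (fun x : ℝ => -(x - μ) ^ 2 / (2 * v)) (-((x - μ) / v)) x := by
    have := ((((hasDerivAt_id x).sub_const μ).pow 2).neg).div_const (2 * (v : ℝ))
    refine HasDerivAt.congr_deriv this ?_
    simp
    field_simp
  refine HasDerivAt.congr_deriv ((h1.exp).const_mul ((√(2 * Real.pi * v))⁻¹)) ?_
  ring

lemma integrable_gaussian_iff (μ : ℝ) (v : NNReal) (hv : v ≠ 0) (f : ℝ → ℝ) :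
    Integrable f (gaussianReal μ v) ↔ Integrable (fun x => gaussianPDFReal μ v x * f x) := by
  rw [gaussianReal_of_var_ne_zero _ hv, integrable_withDensity_iff_integrable_smul'
    (measurable_gaussianPDF _ _) (ae_of_all _ fun _ ↦ gaussianPDF_lt_top)]
  simp

lemma stein_one (μ : ℝ) (v : NNReal) (hv : v ≠ 0) (f f' : ℝ → ℝ) (C : ℝ)
    (hf : ∀ x, HasDerivAt f (f' x) x) (hf'm : Measurable f')
    (hC : ∀ x, |f x| ≤ C) (hC' : ∀ x, |f' x| ≤ C) :
    ∫ x, (x - μ) * f x ∂(gaussianReal μ v) = v * ∫ x, f' x ∂(gaussianReal μ v) := by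
  have hv' : (v : ℝ) ≠ 0 := by exact_mod_cast hv
  have hfc : Continuous f := continuous_iff_continuousAt.2 fun x => (hf x).continuousAt
  have i1 : Integrable f (gaussianReal μ v) :=
    Integrable.of_bound hfc.aestronglyMeasurable C (ae_of_all _ hC)
  have i2 : Integrable f' (gaussianReal μ v) :=
    Integrable.of_bound hf'm.aestronglyMeasurable C (ae_of_all _ hC')
  have i0 : Integrable (fun x => x - μ) (gaussianReal μ v) :=
    ((memLp_id_gaussianReal 1).integrable (by simp)).sub (integrable_const _)
  have i3 : Integrable (fun x => (x - μ) * f x) (gaussianReal μ v) :=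
    i0.mul_bdd hfc.aestronglyMeasurable (ae_of_all _ hC)
  rw [integrable_gaussian_iff _ _ hv] at i1 i2 i3
  have key := integral_mul_deriv_eq_deriv_mul_of_integrable (u := f) (u' := f')
    (v := gaussianPDFReal μ v) (v' := fun x => -((x - μ) / v) * gaussianPDFReal μ v x)
    (fun x _ => hf x) (fun x _ => hasDerivAt_gpdf μ v hv x)
    (by
      refine (i3.const_mul (-(v : ℝ)⁻¹)).congr (ae_of_all _ fun x => ?_)
      simp only [Pi.mul_apply]; field_simp)
    (by
      refine i2.congr (ae_of_all _ fun x => ?_)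
      simp only [Pi.mul_apply]; ring)
    (by
      refine i1.congr (ae_of_all _ fun x => ?_)
      simp only [Pi.mul_apply]; ring)
  rw [integral_gaussianReal_eq_integral_smul hv, integral_gaussianReal_eq_integral_smul hv]
  have e1 : ∫ x, gaussianPDFReal μ v x • ((x - μ) * f x)
      = -(v : ℝ) * ∫ x, f x * (-((x - μ) / v) * gaussianPDFReal μ v x) := by
    rw [← integral_const_mul]
    congr 1; ext x; simp only [smul_eq_mul]; field_simp
  have e2 : ∫ x, gaussianPDFReal μ v x • f' x = ∫ x, f' x * gaussianPDFReal μ v x := by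
    congr 1; ext x; simp only [smul_eq_mul]; ring
  rw [e1, key, e2]; ring

lemma abs_div_bound (t r : ℝ) (hr : 0 < r) : |t / (t ^ 2 + r)| ≤ 1 + 1 / r := by
  have h : 0 < t ^ 2 + r := by positivity
  rw [abs_div, abs_of_pos h, div_le_iff₀ h]
  have h1 : (1 + 1 / r) * (t ^ 2 + r) = t ^ 2 + r + t ^ 2 / r + 1 := by field_simp; ring
  have h2 : 0 ≤ t ^ 2 / r := by positivity
  rw [h1]
  nlinarith [sq_abs t, sq_nonneg (|t| - 1)]

lemma deriv_bound (t r : ℝ) (hr : 0 < r) :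
    |1 / (t ^ 2 + r) - 2 * t ^ 2 / (t ^ 2 + r) ^ 2| ≤ 1 + 1 / r := by
  have h : 0 < t ^ 2 + r := by positivity
  have e : 1 / (t ^ 2 + r) - 2 * t ^ 2 / (t ^ 2 + r) ^ 2
      = ((r - t ^ 2) / (t ^ 2 + r)) * (1 / (t ^ 2 + r)) := by field_simp; ring
  have a1 : |(r - t ^ 2) / (t ^ 2 + r)| ≤ 1 := by
    rw [abs_div, abs_of_pos h, div_le_one h, abs_le]
    constructor <;> nlinarith [sq_nonneg t]
  have a2 : |1 / (t ^ 2 + r)| ≤ 1 / r := by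
    rw [abs_of_pos (by positivity)]
    exact one_div_le_one_div_of_le hr (by nlinarith [sq_nonneg t])
  rw [e, abs_mul]
  nlinarith [abs_nonneg ((r - t ^ 2) / (t ^ 2 + r)), abs_nonneg (1 / (t ^ 2 + r))]

lemma stein_frac (μ : ℝ) (v : NNReal) (hv : v ≠ 0) (r : ℝ) (hr : 0 < r) :
    ∫ x, (x - μ) * (x / (x ^ 2 + r)) ∂(gaussianReal μ v)
      = v * ∫ x, (1 / (x ^ 2 + r) - 2 * x ^ 2 / (x ^ 2 + r) ^ 2) ∂(gaussianReal μ v) := by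
  refine stein_one μ v hv _ _ (1 + 1 / r) (fun x => ?_) (by fun_prop)
    (fun x => abs_div_bound x r hr) (fun x => deriv_bound x r hr)
  have h : x ^ 2 + r ≠ 0 := by positivity
  have := (hasDerivAt_id x).div (((hasDerivAt_id x).pow 2).add_const r) (by simpa using h)
  refine HasDerivAt.congr_deriv this ?_
  simp
  field_simp

lemma coord_sq (d : ℕ) (v : NNReal) (θ : Fin d → ℝ) (j : Fin d) :
    Integrable (fun x : Fin d → ℝ => (x j - θ j) ^ 2)
      (Measure.pi fun i => gaussianReal (θ i) v) ∧
    ∫ x : Fin d → ℝ, (x j - θ j) ^ 2 ∂(Measure.pi fun i => gaussianReal (θ i) v) = v := by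
  have mp := measurePreserving_eval (fun i => gaussianReal (θ i) v) j
  have i0 : Integrable (fun x => (x - θ j) ^ 2) (gaussianReal (θ j) v) :=
    ((memLp_id_gaussianReal 2).sub (memLp_const _)).integrable_sq
  refine ⟨mp.integrable_comp_of_integrable i0, ?_⟩
  have h := integral_map (μ := Measure.pi fun i => gaussianReal (θ i) v)
    mp.measurable.aemeasurable (f := fun x => (x - θ j) ^ 2) (by fun_prop)
  rw [mp.map_eq] at h
  have hv := variance_fun_id_gaussianReal (μ := θ j) (v := v)
  rw [variance_eq_integral measurable_id'.aemeasurable] at hv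
  simp only [integral_id_gaussianReal] at hv
  rw [← hv, h]

lemma coord_ne (d : ℕ) (v : NNReal) (hv : v ≠ 0) (θ : Fin d → ℝ) (j : Fin d) :
    ∀ᵐ x ∂(Measure.pi fun i => gaussianReal (θ i) v), x j ≠ 0 := by
  have mp := measurePreserving_eval (fun i => gaussianReal (θ i) v) j
  have := nullSingletonClass_gaussianReal (μ := θ j) hv
  have h : ∀ᵐ t ∂(gaussianReal (θ j) v), t ≠ 0 := by
    simp [ae_iff]
  exact mp.quasiMeasurePreserving.ae h

lemma coord_stein (d : ℕ) (v : NNReal) (hv : v ≠ 0) (θ : Fin d → ℝ) (j : Fin d)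
    (ε : ℝ) (hε : 0 < ε) :
    Integrable (fun x : Fin d → ℝ => (x j - θ j) * (x j / ((∑ i, x i ^ 2) + ε)))
      (Measure.pi fun i => gaussianReal (θ i) v) ∧
    Integrable (fun x : Fin d → ℝ => 1 / ((∑ i, x i ^ 2) + ε)
        - 2 * x j ^ 2 / ((∑ i, x i ^ 2) + ε) ^ 2)
      (Measure.pi fun i => gaussianReal (θ i) v) ∧
    ∫ x : Fin d → ℝ, (x j - θ j) * (x j / ((∑ i, x i ^ 2) + ε))
      ∂(Measure.pi fun i => gaussianReal (θ i) v)
    = v * ∫ x : Fin d → ℝ, (1 / ((∑ i, x i ^ 2) + ε) - 2 * x j ^ 2 / ((∑ i, x i ^ 2) + ε) ^ 2)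
      ∂(Measure.pi fun i => gaussianReal (θ i) v) := by
  obtain _ | n := d
  · exact j.elim0
  set P := Measure.pi fun i => gaussianReal (θ i) v with hP
  have hs : ∀ x : Fin (n+1) → ℝ, (∑ i, x i ^ 2) + ε
      = x j ^ 2 + ((∑ i, (x (j.succAbove i)) ^ 2) + ε) := by
    intro x; rw [Fin.sum_univ_succAbove _ j]; ring
  have hr : ∀ y : Fin n → ℝ, ε ≤ (∑ i, y i ^ 2) + ε := by
    intro y
    have : 0 ≤ ∑ i, y i ^ 2 := Finset.sum_nonneg fun i _ => sq_nonneg _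
    linarith
  have hb : ∀ y : Fin n → ℝ, 1 + 1 / ((∑ i, y i ^ 2) + ε) ≤ 1 + 1 / ε := by
    intro y
    have := one_div_le_one_div_of_le hε (hr y)
    linarith
  have i0 : Integrable (fun x : Fin (n+1) → ℝ => x j - θ j) P := by
    have h : MemLp (fun x : Fin (n+1) → ℝ => x j - θ j) 2 P :=
      (memLp_two_iff_integrable_sq (Measurable.aestronglyMeasurable (by fun_prop))).2 (coord_sq (n+1) v θ j).1
    exact h.integrable (by simp)
  have i1 : Integrable (fun x : Fin (n+1) → ℝ => (x j - θ j) * (x j / ((∑ i, x i ^ 2) + ε))) P := by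
    refine i0.mul_bdd (c := 1 + 1 / ε) ?_ (ae_of_all _ fun x => ?_)
    · exact Measurable.aestronglyMeasurable (by fun_prop)
    · rw [hs]
      exact (abs_div_bound _ _ (hε.trans_le (hr _))).trans (hb fun i => x (j.succAbove i))
  have i2 : Integrable (fun x : Fin (n+1) → ℝ => 1 / ((∑ i, x i ^ 2) + ε)
        - 2 * x j ^ 2 / ((∑ i, x i ^ 2) + ε) ^ 2) P := by
    refine Integrable.of_bound (C := 1 + 1 / ε) ?_ (ae_of_all _ fun x => ?_)
    · exact Measurable.aestronglyMeasurable (by fun_prop)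
    · rw [hs]
      exact (deriv_bound _ _ (hε.trans_le (hr _))).trans (hb fun i => x (j.succAbove i))
  refine ⟨i1, i2, ?_⟩
  have mp := measurePreserving_piFinSuccAbove (fun i => gaussianReal (θ i) v) j
  set Q := Measure.pi fun i => gaussianReal (θ (j.succAbove i)) v with hQ
  have E := (MeasurableEquiv.piFinSuccAbove (fun _ : Fin (n+1) => ℝ) j).measurableEmbedding
  let F : ℝ × (Fin n → ℝ) → ℝ := fun z =>
    (z.1 - θ j) * (z.1 / (z.1 ^ 2 + ((∑ i, z.2 i ^ 2) + ε)))
  let G : ℝ × (Fin n → ℝ) → ℝ := fun z =>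
    1 / (z.1 ^ 2 + ((∑ i, z.2 i ^ 2) + ε)) - 2 * z.1 ^ 2 / (z.1 ^ 2 + ((∑ i, z.2 i ^ 2) + ε)) ^ 2
  have hF : (fun x : Fin (n+1) → ℝ => (x j - θ j) * (x j / ((∑ i, x i ^ 2) + ε)))
      = F ∘ (MeasurableEquiv.piFinSuccAbove (fun _ : Fin (n+1) => ℝ) j) := by
    ext x; rw [hs]; rfl
  have hG : (fun x : Fin (n+1) → ℝ => 1 / ((∑ i, x i ^ 2) + ε)
        - 2 * x j ^ 2 / ((∑ i, x i ^ 2) + ε) ^ 2)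
      = G ∘ (MeasurableEquiv.piFinSuccAbove (fun _ : Fin (n+1) => ℝ) j) := by
    ext x; rw [hs]; rfl
  rw [hF] at i1 ⊢
  rw [hG] at i2 ⊢
  rw [mp.integrable_comp_emb E] at i1 i2
  simp only [Function.comp_def]
  rw [mp.integral_comp E, mp.integral_comp E, integral_prod_symm _ i1, integral_prod_symm _ i2,
    ← integral_const_mul]
  congr 1; ext y
  exact stein_frac (θ j) v hv _ (hε.trans_le (hr y))

lemma js_quot_bound (s ε : ℝ) (hs : 0 ≤ s) (hε : 0 < ε) :
    s / (s + ε) ^ 2 ≤ 1 / (s + ε) := by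
  have h : 0 < s + ε := by positivity
  rw [div_le_div_iff₀ (by positivity) h]
  nlinarith [mul_pos h hε]

lemma inner_young (d : ℕ) (x θ : Fin d → ℝ) (a q : ℝ) (ha : 0 < a) :
    |∑ j, (x j - θ j) * (x j / q)| ≤
      (1 / a * ∑ j, (x j - θ j) ^ 2 + a * ((∑ j, x j ^ 2) / q ^ 2)) / 2 := by
  have e : (1 / a * ∑ j, (x j - θ j) ^ 2 + a * ((∑ j, x j ^ 2) / q ^ 2)) / 2
     = ∑ j, (1 / a * (x j - θ j) ^ 2 + a * (x j / q) ^ 2) / 2 := by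
    simp only [div_pow]
    rw [← Finset.sum_div, Finset.sum_add_distrib, ← Finset.mul_sum, ← Finset.mul_sum,
      Finset.sum_div]
  rw [e]
  refine (Finset.abs_sum_le_sum_abs _ _).trans (Finset.sum_le_sum fun j _ => ?_)
  have key : ∀ u w : ℝ, |u * w| ≤ (1 / a * u ^ 2 + a * w ^ 2) / 2 := by
    intro u w
    rw [abs_mul, ← sq_abs u, ← sq_abs w]
    have : 0 ≤ 1 / a * (|u| - a * |w|) ^ 2 := by positivity
    have h2 : 1 / a * (|u| - a * |w|) ^ 2
      = 1 / a * |u| ^ 2 + a * |w| ^ 2 - 2 * (|u| * |w|) := by field_simp; ring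
    linarith
  exact key _ _

lemma sum_stein (d : ℕ) (v : NNReal) (hv : v ≠ 0) (θ : Fin d → ℝ)
    (ε : ℝ) (hε : 0 < ε) :
    Integrable (fun x : Fin d → ℝ => ∑ j, (x j - θ j) * (x j / ((∑ i, x i ^ 2) + ε)))
      (Measure.pi fun i => gaussianReal (θ i) v) ∧
    Integrable (fun x : Fin d → ℝ => (d : ℝ) * (1 / ((∑ i, x i ^ 2) + ε))
        - 2 * ((∑ i, x i ^ 2) / ((∑ i, x i ^ 2) + ε) ^ 2))
      (Measure.pi fun i => gaussianReal (θ i) v) ∧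
    ∫ x : Fin d → ℝ, ∑ j, (x j - θ j) * (x j / ((∑ i, x i ^ 2) + ε))
      ∂(Measure.pi fun i => gaussianReal (θ i) v)
    = v * ∫ x : Fin d → ℝ, ((d : ℝ) * (1 / ((∑ i, x i ^ 2) + ε))
        - 2 * ((∑ i, x i ^ 2) / ((∑ i, x i ^ 2) + ε) ^ 2))
      ∂(Measure.pi fun i => gaussianReal (θ i) v) := by
  have h := fun j => coord_stein d v hv θ j ε hε
  have e : (fun x : Fin d → ℝ => (d : ℝ) * (1 / ((∑ i, x i ^ 2) + ε))
        - 2 * ((∑ i, x i ^ 2) / ((∑ i, x i ^ 2) + ε) ^ 2)) = fun x : Fin d → ℝ =>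
        ∑ j, (1 / ((∑ i, x i ^ 2) + ε) - 2 * x j ^ 2 / ((∑ i, x i ^ 2) + ε) ^ 2) := by
    ext x
    have h2 : ∑ j, 2 * x j ^ 2 / ((∑ i, x i ^ 2) + ε) ^ 2
        = 2 * ((∑ i, x i ^ 2) / ((∑ i, x i ^ 2) + ε) ^ 2) := by
      rw [← Finset.sum_div, ← Finset.mul_sum, mul_div_assoc]
    rw [Finset.sum_sub_distrib, h2]
    simp
  rw [e]
  refine ⟨integrable_finsetSum _ fun j _ => (h j).1,
    integrable_finsetSum _ fun j _ => (h j).2.1, ?_⟩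
  rw [integral_finsetSum _ fun j _ => (h j).1, integral_finsetSum _ fun j _ => (h j).2.1,
    Finset.mul_sum]
  exact Finset.sum_congr rfl fun j _ => (h j).2.2

lemma risk_id (d : ℕ) (v : NNReal) (θ : Fin d → ℝ) :
    Integrable (fun x : Fin d → ℝ => ∑ j, (x j - θ j) ^ 2)
      (Measure.pi fun i => gaussianReal (θ i) v) ∧
    ∫ x : Fin d → ℝ, ∑ j, (x j - θ j) ^ 2 ∂(Measure.pi fun i => gaussianReal (θ i) v)
      = d * v := by
  refine ⟨integrable_finsetSum _ fun j _ => (coord_sq d v θ j).1, ?_⟩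
  rw [integral_finsetSum _ fun j _ => (coord_sq d v θ j).1]
  simp [(coord_sq d v θ _).2]

lemma sumsq_pos (d : ℕ) (hd : 3 ≤ d) (v : NNReal) (hv : v ≠ 0) (θ : Fin d → ℝ) :
    ∀ᵐ x ∂(Measure.pi fun i => gaussianReal (θ i) v), 0 < ∑ i, x i ^ 2 := by
  filter_upwards [coord_ne d v hv θ ⟨0, by omega⟩] with x hx
  exact Finset.sum_pos' (fun i _ => sq_nonneg _) ⟨_, Finset.mem_univ _, by positivity⟩

lemma reg_bound (d : ℕ) (hd : 3 ≤ d) (v : NNReal) (hv : v ≠ 0) (θ : Fin d → ℝ)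
    (ε : ℝ) (hε : 0 < ε) :
    Integrable (fun x : Fin d → ℝ => 1 / ((∑ i, x i ^ 2) + ε))
      (Measure.pi fun i => gaussianReal (θ i) v) ∧
    ∫ x : Fin d → ℝ, 1 / ((∑ i, x i ^ 2) + ε) ∂(Measure.pi fun i => gaussianReal (θ i) v)
      ≤ d / (v * ((d : ℝ) - 2) ^ 2) := by
  set P := Measure.pi fun i => gaussianReal (θ i) v with hP
  obtain ⟨i1, i2, h⟩ := sum_stein d v hv θ ε hε
  obtain ⟨i3, h3⟩ := risk_id d v θ
  rw [← hP] at i1 i2 h i3 h3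
  have hv' : (0 : ℝ) < v := by exact_mod_cast pos_iff_ne_zero.2 hv
  have hd' : (0 : ℝ) < (d : ℝ) - 2 := by
    have : (3 : ℝ) ≤ d := by exact_mod_cast hd
    linarith
  have hS : ∀ x : Fin d → ℝ, 0 ≤ ∑ i, x i ^ 2 := fun x =>
    Finset.sum_nonneg fun i _ => sq_nonneg _
  have i4 : Integrable (fun x : Fin d → ℝ => 1 / ((∑ i, x i ^ 2) + ε)) P := by
    refine Integrable.of_bound (C := 1 / ε) (Measurable.aestronglyMeasurable (by fun_prop))
      (ae_of_all _ fun x => ?_)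
    have := hS x
    rw [Real.norm_of_nonneg (by positivity)]
    exact one_div_le_one_div_of_le hε (by linarith)
  refine ⟨i4, ?_⟩
  set I := ∫ x : Fin d → ℝ, 1 / ((∑ i, x i ^ 2) + ε) ∂P with hI
  have lo : ((d : ℝ) - 2) * I ≤ ∫ x : Fin d → ℝ, ((d : ℝ) * (1 / ((∑ i, x i ^ 2) + ε))
        - 2 * ((∑ i, x i ^ 2) / ((∑ i, x i ^ 2) + ε) ^ 2)) ∂P := by
    rw [hI, ← integral_const_mul]
    refine integral_mono (i4.const_mul _) i2 fun x => ?_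
    have := js_quot_bound _ ε (hS x) hε
    simp only
    linarith
  set a : ℝ := v * ((d : ℝ) - 2) with ha
  have ha0 : 0 < a := by positivity
  have hi : ∫ x : Fin d → ℝ, ∑ j, (x j - θ j) * (x j / ((∑ i, x i ^ 2) + ε)) ∂P
      ≤ ∫ x : Fin d → ℝ, (1 / (2 * a) * ∑ j, (x j - θ j) ^ 2
          + a / 2 * (1 / ((∑ i, x i ^ 2) + ε))) ∂P := by
    refine integral_mono i1 ((i3.const_mul _).add (i4.const_mul _)) fun x => ?_
    have h1 := (le_abs_self _).trans (inner_young d x θ a ((∑ i, x i ^ 2) + ε) ha0)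
    have h2 := mul_le_mul_of_nonneg_left (js_quot_bound _ ε (hS x) hε) ha0.le
    refine h1.trans ?_
    have e : 1 / (2 * a) * ∑ j, (x j - θ j) ^ 2 = (1 / a * ∑ j, (x j - θ j) ^ 2) / 2 := by
      field_simp
    simp only [e]
    linarith
  rw [integral_add (i3.const_mul _) (i4.const_mul _), integral_const_mul, integral_const_mul,
    h3, ← hI, h] at hi
  have := mul_le_mul_of_nonneg_left lo hv'.le
  have h5 : a / 2 * I ≤ 1 / (2 * a) * (d * v) := by
    have : v * (((d : ℝ) - 2) * I) = a * I := by rw [ha]; ring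
    linarith
  have h6 : I ≤ (1 / (2 * a) * (d * v)) / (a / 2) := by
    rw [le_div_iff₀ (by positivity)]; linarith
  refine h6.trans (le_of_eq ?_)
  rw [ha]; field_simp

lemma eps_tendsto : Filter.Tendsto (fun n : ℕ => (1 : ℝ) / (n + 1)) Filter.atTop (nhds 0) :=
  tendsto_one_div_add_atTop_nhds_zero_nat

lemma inv_integrable (d : ℕ) (hd : 3 ≤ d) (v : NNReal) (hv : v ≠ 0) (θ : Fin d → ℝ) :
    Integrable (fun x : Fin d → ℝ => (∑ i, x i ^ 2)⁻¹)
      (Measure.pi fun i => gaussianReal (θ i) v) := by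
  set P := Measure.pi fun i => gaussianReal (θ i) v with hP
  have hS : ∀ x : Fin d → ℝ, 0 ≤ ∑ i, x i ^ 2 := fun x =>
    Finset.sum_nonneg fun i _ => sq_nonneg _
  have he : ∀ n : ℕ, (0 : ℝ) < 1 / (n + 1) := fun n => by positivity
  have hm : ∀ n : ℕ, Measurable fun x : Fin d → ℝ =>
      ENNReal.ofReal (1 / ((∑ i, x i ^ 2) + 1 / ((n : ℝ) + 1))) := by
    intro n; fun_prop
  have fatou := lintegral_liminf_le (μ := P) (u := Filter.atTop) hm
  refine ⟨Measurable.aestronglyMeasurable (by fun_prop), ?_⟩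
  rw [hasFiniteIntegral_iff_ofReal (ae_of_all _ fun x => inv_nonneg.2 (hS x))]
  have e : ∫⁻ x, ENNReal.ofReal ((∑ i, x i ^ 2)⁻¹) ∂P = ∫⁻ x, Filter.liminf (fun n : ℕ =>
      ENNReal.ofReal (1 / ((∑ i, x i ^ 2) + 1 / ((n : ℝ) + 1)))) Filter.atTop ∂P := by
    refine lintegral_congr_ae ?_
    filter_upwards [sumsq_pos d hd v hv θ] with x hx
    refine (Filter.Tendsto.liminf_eq ?_).symm
    refine ENNReal.tendsto_ofReal ?_
    have := (eps_tendsto.const_add (∑ i, x i ^ 2)).inv₀ (by simpa using hx.ne')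
    simpa using this
  rw [e]
  refine (fatou.trans ?_).trans_lt
    (ENNReal.ofReal_lt_top (r := d / (v * ((d : ℝ) - 2) ^ 2)))
  refine (Filter.liminf_le_liminf (Filter.Eventually.of_forall fun n => ?_)).trans_eq
    (Filter.liminf_const _)
  obtain ⟨j1, j2⟩ := reg_bound d hd v hv θ _ (he n)
  rw [← ofReal_integral_eq_lintegral_ofReal j1 (ae_of_all _ fun x => ?_)]
  · exact ENNReal.ofReal_le_ofReal j2
  · have := hS x
    simp only [Pi.zero_apply]
    positivity

lemma stein_limit (d : ℕ) (hd : 3 ≤ d) (v : NNReal) (hv : v ≠ 0) (θ : Fin d → ℝ) :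
    Integrable (fun x : Fin d → ℝ => ∑ j, (x j - θ j) * (x j / (∑ i, x i ^ 2)))
      (Measure.pi fun i => gaussianReal (θ i) v) ∧
    ∫ x : Fin d → ℝ, ∑ j, (x j - θ j) * (x j / (∑ i, x i ^ 2))
      ∂(Measure.pi fun i => gaussianReal (θ i) v)
    = v * (((d : ℝ) - 2) * ∫ x : Fin d → ℝ, (∑ i, x i ^ 2)⁻¹
      ∂(Measure.pi fun i => gaussianReal (θ i) v)) := by
  have hinv := inv_integrable d hd v hv θ
  have hpos := sumsq_pos d hd v hv θ
  have hid := (risk_id d v θ).1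
  have hst := fun n : ℕ => sum_stein d v hv θ (1 / ((n : ℝ) + 1)) (by positivity)
  set P := Measure.pi fun i => gaussianReal (θ i) v with hP
  have he : ∀ n : ℕ, (0 : ℝ) < 1 / (n + 1) := fun n => by positivity
  have hdom : Integrable (fun x : Fin d → ℝ =>
      (1 / 1 * ∑ j, (x j - θ j) ^ 2 + 1 * (∑ i, x i ^ 2)⁻¹) / 2) P :=
    ((hid.const_mul _).add (hinv.const_mul _)).div_const _
  have hq : ∀ s ε : ℝ, 0 < s → 0 < ε → 1 / (s + ε) ≤ s⁻¹ := by
    intro s ε hs hε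
    rw [inv_eq_one_div]
    exact one_div_le_one_div_of_le hs (by linarith)
  have hlim : ∀ s : ℝ, 0 < s → Filter.Tendsto (fun n : ℕ => s + 1 / ((n : ℝ) + 1))
      Filter.atTop (nhds s) := by
    intro s hs
    simpa using eps_tendsto.const_add s
  have t1 : Filter.Tendsto (fun n : ℕ => ∫ x : Fin d → ℝ,
      ∑ j, (x j - θ j) * (x j / ((∑ i, x i ^ 2) + 1 / ((n : ℝ) + 1))) ∂P) Filter.atTop
      (nhds (∫ x : Fin d → ℝ, ∑ j, (x j - θ j) * (x j / (∑ i, x i ^ 2)) ∂P)) := by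
    refine tendsto_integral_of_dominated_convergence _ (fun n => (hst n).1.1) hdom
      (fun n => ?_) ?_
    · filter_upwards [hpos] with x hx
      refine (inner_young d x θ 1 _ one_pos).trans ?_
      have h1 := js_quot_bound _ _ hx.le (he n)
      have h2 := hq _ _ hx (he n)
      linarith
    · filter_upwards [hpos] with x hx
      exact tendsto_finsetSum _ fun j _ =>
        Filter.Tendsto.const_mul _ (tendsto_const_nhds.div (hlim _ hx) hx.ne')
  have t2 : Filter.Tendsto (fun n : ℕ => ∫ x : Fin d → ℝ,
      ((d : ℝ) * (1 / ((∑ i, x i ^ 2) + 1 / ((n : ℝ) + 1)))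
        - 2 * ((∑ i, x i ^ 2) / ((∑ i, x i ^ 2) + 1 / ((n : ℝ) + 1)) ^ 2)) ∂P) Filter.atTop
      (nhds (∫ x : Fin d → ℝ, ((d : ℝ) - 2) * (∑ i, x i ^ 2)⁻¹ ∂P)) := by
    refine tendsto_integral_of_dominated_convergence
      (fun x : Fin d → ℝ => ((d : ℝ) + 2) * (∑ i, x i ^ 2)⁻¹)
      (fun n => (hst n).2.1.1) (hinv.const_mul _) (fun n => ?_) ?_
    · filter_upwards [hpos] with x hx
      have h1 := js_quot_bound _ _ hx.le (he n)
      have h2 := hq _ _ hx (he n)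
      have h3 : 0 ≤ (∑ i, x i ^ 2) / ((∑ i, x i ^ 2) + 1 / ((n : ℝ) + 1)) ^ 2 := by positivity
      have h4 : 0 ≤ 1 / ((∑ i, x i ^ 2) + 1 / ((n : ℝ) + 1)) := by positivity
      have h5 := mul_le_mul_of_nonneg_left h2 (Nat.cast_nonneg (α := ℝ) d)
      have h6 := mul_nonneg (Nat.cast_nonneg (α := ℝ) d) h4
      have h7 := mul_nonneg (Nat.cast_nonneg (α := ℝ) d) (h4.trans h2)
      rw [Real.norm_eq_abs, abs_le]
      constructor <;> linarith
    · filter_upwards [hpos] with x hx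
      have l := ((tendsto_const_nhds (x := (1 : ℝ))).div (hlim _ hx) hx.ne').const_mul (d : ℝ)
      have l2 := ((tendsto_const_nhds (x := ∑ i, x i ^ 2)).div ((hlim _ hx).pow 2)
        (pow_ne_zero 2 hx.ne')).const_mul 2
      have := l.sub l2
      have e : (d : ℝ) * (1 / ∑ i, x i ^ 2) - 2 * ((∑ i, x i ^ 2) / (∑ i, x i ^ 2) ^ 2)
          = ((d : ℝ) - 2) * (∑ i, x i ^ 2)⁻¹ := by
        have := hx.ne'
        field_simp
      rw [e] at this
      exact this
  constructor
  · refine hdom.mono' (Measurable.aestronglyMeasurable (by fun_prop)) ?_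
    filter_upwards [hpos] with x hx
    refine (inner_young d x θ 1 _ one_pos).trans (le_of_eq ?_)
    have := hx.ne'
    field_simp
  · rw [← integral_const_mul]
    refine tendsto_nhds_unique t1 ?_
    have := t2.const_mul (v : ℝ)
    refine this.congr fun n => ?_
    exact (hst n).2.2.symm

lemma inv_pos_integral (d : ℕ) (hd : 3 ≤ d) (v : NNReal) (hv : v ≠ 0) (θ : Fin d → ℝ) :
    0 < ∫ x : Fin d → ℝ, (∑ i, x i ^ 2)⁻¹ ∂(Measure.pi fun i => gaussianReal (θ i) v) := by
  have hinv := inv_integrable d hd v hv θ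
  have hpos := sumsq_pos d hd v hv θ
  have h0 : 0 ≤ fun x : Fin d → ℝ => (∑ i, x i ^ 2)⁻¹ := fun x =>
    inv_nonneg.2 (Finset.sum_nonneg fun i _ => sq_nonneg _)
  refine lt_of_le_of_ne (integral_nonneg h0) fun h => ?_
  have h1 := (integral_eq_zero_iff_of_nonneg h0 hinv).1 h.symm
  have : ∀ᵐ x ∂(Measure.pi fun i => gaussianReal (θ i) v), False := by
    filter_upwards [h1, hpos] with x hx hp
    exact (inv_pos.2 hp).ne' hx
  rw [ae_iff] at this
  simp only [not_false_eq_true, Set.setOf_true, measure_univ, one_ne_zero] at this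

/-- James–Stein: for `X ~ N(θ, σ²I_d)` in `ℝᵈ`, `d ≥ 3`, the estimator
`δ_JS(X) = (1 - (d-2)σ²/‖X‖²)X` has risk
`dσ² - (d-2)²σ⁴ E[1/‖X‖²] < dσ² = E[‖X-θ‖²]` for every `θ`;
hence `δ(X) = X` is inadmissible under squared error loss. -/
theorem james_stein_dominates
    (d : ℕ) (hd : 3 ≤ d) (σ : NNReal) (hσ : 0 < σ) (θ : Fin d → ℝ)
    (P : Measure (Fin d → ℝ))
    (hP : P = Measure.pi fun i => gaussianReal (θ i) (σ ^ 2))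
    (δJS : (Fin d → ℝ) → Fin d → ℝ)
    (hδJS : δJS = fun x j =>
      (1 - ((d : ℝ) - 2) * (σ : ℝ) ^ 2 / ∑ i, x i ^ 2) * x j) :
    (∫ x, ∑ j, (δJS x j - θ j) ^ 2 ∂P)
        = (d : ℝ) * (σ : ℝ) ^ 2
          - ((d : ℝ) - 2) ^ 2 * (σ : ℝ) ^ 4 * ∫ x, (∑ i, x i ^ 2)⁻¹ ∂P ∧
    (∫ x, ∑ j, (δJS x j - θ j) ^ 2 ∂P) < (d : ℝ) * (σ : ℝ) ^ 2 ∧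
    (∫ x, ∑ j, (x j - θ j) ^ 2 ∂P) = (d : ℝ) * (σ : ℝ) ^ 2 := by
  have hv : σ ^ 2 ≠ 0 := pow_ne_zero 2 hσ.ne'
  subst hP hδJS
  have hinv := inv_integrable d hd (σ ^ 2) hv θ
  have hpos := sumsq_pos d hd (σ ^ 2) hv θ
  have hipos := inv_pos_integral d hd (σ ^ 2) hv θ
  obtain ⟨i1, h1⟩ := risk_id d (σ ^ 2) θ
  obtain ⟨i2, h2⟩ := stein_limit d hd (σ ^ 2) hv θ
  set P := Measure.pi fun i => gaussianReal (θ i) (σ ^ 2) with hP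
  set c : ℝ := ((d : ℝ) - 2) * (σ : ℝ) ^ 2 with hc
  push_cast at h1 h2
  have hd' : (0 : ℝ) < (d : ℝ) - 2 := by
    have : (3 : ℝ) ≤ d := by exact_mod_cast hd
    linarith
  have hσ' : (0 : ℝ) < σ := by exact_mod_cast hσ
  have main : (∫ x : Fin d → ℝ, ∑ j, ((1 - c / ∑ i, x i ^ 2) * x j - θ j) ^ 2 ∂P)
      = (d : ℝ) * (σ : ℝ) ^ 2
          - ((d : ℝ) - 2) ^ 2 * (σ : ℝ) ^ 4 * ∫ x, (∑ i, x i ^ 2)⁻¹ ∂P := by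
    have e : (∫ x : Fin d → ℝ, ∑ j, ((1 - c / ∑ i, x i ^ 2) * x j - θ j) ^ 2 ∂P)
        = ∫ x : Fin d → ℝ, (∑ j, (x j - θ j) ^ 2
          - 2 * c * ∑ j, (x j - θ j) * (x j / (∑ i, x i ^ 2))
          + c ^ 2 * (∑ i, x i ^ 2)⁻¹) ∂P := by
      refine integral_congr_ae ?_
      filter_upwards [hpos] with x hx
      have e1 : (∑ i, x i ^ 2)⁻¹ = ∑ j, (x j / ∑ i, x i ^ 2) ^ 2 := by
        simp only [div_pow]
        rw [← Finset.sum_div]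
        have := hx.ne'
        field_simp
      rw [e1, Finset.mul_sum, Finset.mul_sum, ← Finset.sum_sub_distrib, ← Finset.sum_add_distrib]
      refine Finset.sum_congr rfl fun j _ => ?_
      ring
    have i3 : Integrable (fun x : Fin d → ℝ => ∑ j, (x j - θ j) ^ 2
          - 2 * c * ∑ j, (x j - θ j) * (x j / (∑ i, x i ^ 2))) P := i1.sub (i2.const_mul _)
    rw [e, integral_add i3 (hinv.const_mul _),
      integral_sub i1 (i2.const_mul _), integral_const_mul, integral_const_mul, h1, h2, hc]
    ring
  refine ⟨main, ?_, h1⟩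
  change (∫ x : Fin d → ℝ, ∑ j, ((1 - c / ∑ i, x i ^ 2) * x j - θ j) ^ 2 ∂P) < _
  rw [main]
  have : 0 < ((d : ℝ) - 2) ^ 2 * (σ : ℝ) ^ 4 * ∫ x, (∑ i, x i ^ 2)⁻¹ ∂P := by positivity
  linarith
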